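/- arXiv:2212.14638 — 2 statements merged into one kernel-verified Lean document; each statement's English description precedes it below -/
import Mathlib

section
/- Let N be a positive integer, U an N×N complex unitary matrix, and v ∈ ℂ^N a unit vector. Let λ_1, …, λ_N : (0,1) → ℂ be differentiable functions such that for every t ∈ (0,1) the values λ_1(t), …, λ_N(t) are pairwise distinct and form exactly the spectrum of G(t) = U·A(t) (i.e. the multiset {λ_1(t), …, λ_N(t)} equals the multiset of roots of the characteristic polynomial of G(t)). Then for every j ∈ {1, …, N} and every t ∈ (0,1): λ_j'(t) = [(1 − |λ_j(t)|²)/(t·(1 − t²))] · (∏_{k=1}^N λ_k(t)) · ∏_{k ≠ j} (λ_j(t)·conj(λ_k(t)) − 1)/(λ_j(t) − λ_k(t)). -/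
open Matrix Polynomial Finset

noncomputable section

/-- The rank-one multiplicative perturbation `A(t) = I_N - (1-t) v v^*`. -/
def Apert {N : ℕ} (v : Fin N → ℂ) (t : ℝ) : Matrix (Fin N) (Fin N) ℂ :=
  1 - ((1 : ℂ) - (t : ℂ)) • vecMulVec v (star v)

/-- The `UA` model `G(t) = U · A(t)`. -/
def Gpert {N : ℕ} (U : Matrix (Fin N) (Fin N) ℂ) (v : Fin N → ℂ) (t : ℝ) :
    Matrix (Fin N) (Fin N) ℂ :=
  U * Apert v t

/-!
Since `t` enters `G(t)` through a rank-one term, the characteristic polynomial `p_t` of `G(t)` is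
affine in `t`: `p_t = p_0 + t (p_1 - p_0)`, where `p_1` belongs to `G(1) = U`. A simple root `λ` of
`p_t` therefore moves with velocity `-(p_1 - p_0)(λ) / p_t'(λ)`, and affinity together with
`p_t(λ) = 0` gives `(t⁻¹ - t) (p_1 - p_0)(λ) = p_{t⁻¹}(λ)`. The relation `G(t)ᴴ G(t⁻¹) = 1` reflects
the spectrum of `G(t)` in the unit circle onto that of `G(t⁻¹)`, so that
`p_{t⁻¹}(λ) = det G(t⁻¹) ∏_k (λ conj λ_k - 1)`.
-/

section RootDerivative

open Topology

variable {𝕜 𝕜' : Type*} [NontriviallyNormedField 𝕜] [NontriviallyNormedField 𝕜']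
  [NormedAlgebra 𝕜 𝕜'] {μ : 𝕜 → 𝕜'} {t : 𝕜}

lemma hasDerivAt_of_comp_eq_sub_smul {F : 𝕜' → 𝕜'} {F' : 𝕜'} {h : 𝕜 → 𝕜'}
    (hμ : ContinuousAt μ t) (hF : HasDerivAt F F' (μ t)) (hF' : F' ≠ 0) (hh : ContinuousAt h t)
    (hcomp : ∀ᶠ s in 𝓝 t, F (μ s) = (s - t) • h s) :
    HasDerivAt μ (h t / F') t := by
  set D := dslope F (μ t)
  have hD : D (μ t) = F' := (dslope_same F (μ t)).trans hF.deriv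
  have hDμ : ContinuousAt (fun s => D (μ s)) t :=
    ContinuousAt.comp (continuousAt_dslope_same.2 hF.differentiableAt) hμ
  have hzero : F (μ t) = 0 := by simpa using hcomp.self_of_nhds
  have hquot : ContinuousAt (fun s => h s / D (μ s)) t := hh.div hDμ (hD ▸ hF')
  rw [hasDerivAt_iff_tendsto_slope, ← hD]
  refine (hquot.tendsto.mono_left nhdsWithin_le_nhds).congr' ?_
  filter_upwards [nhdsWithin_le_nhds hcomp, self_mem_nhdsWithin,
    nhdsWithin_le_nhds (hDμ.eventually_ne (hD ▸ hF'))] with s hs hst hDs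
  have hfactor : (μ s - μ t) * D (μ s) = (s - t) • h s := by
    rw [← hs, ← smul_eq_mul, sub_smul_dslope_of_zero hzero]
  rw [slope_def_module, eq_comm, eq_div_iff hDs, smul_mul_assoc, hfactor,
    inv_smul_smul₀ (sub_ne_zero.2 hst)]

lemma hasDerivAt_root_of_affine_pencil {p q : 𝕜'[X]} (hμ : ContinuousAt μ t)
    (hroot : ∀ᶠ s in 𝓝 t, (p + C (algebraMap 𝕜 𝕜' s) * q).IsRoot (μ s))
    (hsimple : (derivative (p + C (algebraMap 𝕜 𝕜' t) * q)).eval (μ t) ≠ 0) :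
    HasDerivAt μ
      (-q.eval (μ t) / (derivative (p + C (algebraMap 𝕜 𝕜' t) * q)).eval (μ t)) t := by
  refine hasDerivAt_of_comp_eq_sub_smul (h := fun s => -q.eval (μ s)) hμ
    ((p + C (algebraMap 𝕜 𝕜' t) * q).hasDerivAt (μ t)) hsimple
    (q.continuous.continuousAt.comp hμ).neg ?_
  filter_upwards [hroot] with s hs
  simp only [IsRoot.def, eval_add, eval_mul, eval_C] at hs ⊢
  rw [Algebra.smul_def, map_sub]
  linear_combination hs

end RootDerivative

section Determinant

variable {n R : Type*} [Fintype n] [DecidableEq n]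

-- Bordering `M` moves the rank-one term into a single column, where `det` is linear.
lemma det_add_vecMulVec_eq_det_updateCol [CommRing R] (M : Matrix n n R) (u w : n → R) :
    (M + vecMulVec u w).det =
      ((fromBlocks M 0 (replicateRow Unit (-w)) 0).updateCol (Sum.inr ()) (Sum.elim u 1)).det := by
  have hborder : (fromBlocks M 0 (replicateRow Unit (-w)) 0).updateCol (Sum.inr ()) (Sum.elim u 1) =
      fromBlocks M (replicateCol Unit u) (replicateRow Unit (-w)) 1 := by
    ext (i | i) (k | k) <;> simp
  rw [hborder, det_fromBlocks_one₂₂, vecMulVec_eq Unit]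
  congr 1
  ext i k
  simp [Matrix.mul_apply]

lemma det_add_smul_vecMulVec [CommRing R] (M : Matrix n n R) (u w : n → R) (s : R) :
    (M + s • vecMulVec u w).det = (1 - s) * M.det + s * (M + vecMulVec u w).det := by
  have hcol : (Sum.elim (s • u) 1 : n ⊕ Unit → R) =
      (1 - s) • Sum.elim (0 : n → R) 1 + s • Sum.elim u 1 := by
    ext (i | i) <;> simp
  have hM : M.det = (M + vecMulVec 0 w).det := by simp
  rw [hM, ← smul_vecMulVec]
  simp only [det_add_vecMulVec_eq_det_updateCol]
  rw [hcol, det_updateCol_add, det_updateCol_smul, det_updateCol_smul]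

lemma charpoly_sub_smul_vecMulVec [CommRing R] (M : Matrix n n R) (u w : n → R) (s : R) :
    (M - s • vecMulVec u w).charpoly =
      C (1 - s) * M.charpoly + C s * (M - vecMulVec u w).charpoly := by
  have hcharmatrix (r : R) : (M - r • vecMulVec u w).charmatrix =
      M.charmatrix + C r • vecMulVec (C ∘ u) (C ∘ w) := by
    ext1 i k
    simp only [charmatrix_apply, Matrix.add_apply, Matrix.sub_apply, Matrix.smul_apply,
      vecMulVec_apply, Function.comp_apply, smul_eq_mul, C_sub, C_mul]
    ring
  have hone := hcharmatrix 1
  rw [one_smul, C_1, one_smul] at hone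
  rw [charpoly, charpoly, charpoly, hcharmatrix, hone, det_add_smul_vecMulVec, C_sub, C_1]

lemma charpoly_conjTranspose [CommRing R] [StarRing R] (M : Matrix n n R) :
    Mᴴ.charpoly = M.charpoly.map (starRingEnd R) := by
  rw [← charpoly_map, ← charpoly_transpose]
  rfl

lemma det_eq_prod_of_charpoly_eq_prod [CommRing R] {M : Matrix n n R} {a : n → R}
    (hM : M.charpoly = ∏ i, (X - C (a i))) :
    M.det = ∏ i, a i := by
  rw [det_eq_sign_charpoly_coeff, coeff_zero_eq_eval_zero, hM, eval_prod, ← card_univ,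
    ← prod_const, ← prod_mul_distrib]
  simp

variable [Field R] {M : Matrix n n R} {a : n → R}

lemma det_smul_sub_one_of_charpoly_eq_prod (hM : M.charpoly = ∏ i, (X - C (a i))) (z : R) :
    (z • M - 1).det = ∏ i, (z * a i - 1) := by
  obtain rfl | hz := eq_or_ne z 0
  · simp [det_neg]
  have hfactor : z • M - 1 = (-z) • (scalar n z⁻¹ - M) := by
    rw [scalar_apply, ← smul_one_eq_diagonal, smul_sub, smul_smul, neg_mul, mul_inv_cancel₀ hz]
    module
  rw [hfactor, det_smul, ← eval_charpoly, hM, eval_prod, ← card_univ, ← prod_const,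
    ← prod_mul_distrib]
  refine prod_congr rfl fun i _ => ?_
  rw [eval_sub, eval_X, eval_C]
  field_simp
  ring

lemma eval_charpoly_of_conjTranspose_mul_eq_one [StarRing R] {M' : Matrix n n R}
    (hMM' : Mᴴ * M' = 1) (hM : M.charpoly = ∏ i, (X - C (a i))) (z : R) :
    M'.charpoly.eval z = M'.det * ∏ i, (z * starRingEnd R (a i) - 1) := by
  have hMH : Mᴴ.charpoly = ∏ i, (X - C (starRingEnd R (a i))) := by
    simp [charpoly_conjTranspose, hM, Polynomial.map_prod]
  have hfactor : scalar n z - M' = (z • Mᴴ - 1) * M' := by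
    rw [sub_mul, smul_mul_assoc, hMM', one_mul, smul_one_eq_diagonal]
    rfl
  rw [eval_charpoly, hfactor, det_mul, det_smul_sub_one_of_charpoly_eq_prod hMH, mul_comm]

end Determinant

section RankOnePerturbation

variable {N : ℕ} {U : Matrix (Fin N) (Fin N) ℂ} {v : Fin N → ℂ}

lemma star_dotProduct_self_eq_sum_normSq {n : Type*} [Fintype n] (v : n → ℂ) :
    star v ⬝ᵥ v = ((∑ i, Complex.normSq (v i) : ℝ) : ℂ) := by
  simp [dotProduct, Complex.normSq_eq_conj_mul_self]

lemma Apert_one (v : Fin N → ℂ) : Apert v 1 = 1 := by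
  simp [Apert]

lemma Apert_mul_Apert (hv : star v ⬝ᵥ v = 1) (s t : ℝ) :
    Apert v s * Apert v t = Apert v (s * t) := by
  have hidem : vecMulVec v (star v) * vecMulVec v (star v) = vecMulVec v (star v) := by
    rw [vecMulVec_mul_vecMulVec, hv, one_smul]
  simp only [Apert, sub_mul, mul_sub, smul_mul_smul_comm, hidem, one_mul, mul_one]
  push_cast
  module

lemma conjTranspose_Apert (v : Fin N → ℂ) (t : ℝ) : (Apert v t)ᴴ = Apert v t := by
  simp [Apert, conjTranspose_vecMulVec]

lemma det_Apert (hv : star v ⬝ᵥ v = 1) (t : ℝ) : (Apert v t).det = t := by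
  rw [Apert, sub_eq_add_neg, ← neg_smul, ← smul_vecMulVec, vecMulVec_eq Unit,
    det_one_add_replicateCol_mul_replicateRow, dotProduct_smul, hv]
  simp

lemma det_Gpert (hv : star v ⬝ᵥ v = 1) (t : ℝ) : (Gpert U v t).det = U.det * t := by
  rw [Gpert, det_mul, det_Apert hv]

lemma conjTranspose_Gpert_mul_Gpert_inv (hU : U ∈ unitaryGroup (Fin N) ℂ)
    (hv : star v ⬝ᵥ v = 1) {t : ℝ} (ht : t ≠ 0) :
    (Gpert U v t)ᴴ * Gpert U v t⁻¹ = 1 := by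
  have hUU : Uᴴ * U = 1 := mem_unitaryGroup_iff'.1 hU
  rw [Gpert, Gpert, conjTranspose_mul, conjTranspose_Apert, mul_assoc, ← mul_assoc Uᴴ, hUU, one_mul,
    Apert_mul_Apert hv, mul_inv_cancel₀ ht, Apert_one]

lemma charpoly_Gpert (U : Matrix (Fin N) (Fin N) ℂ) (v : Fin N → ℂ) (t : ℝ) :
    (Gpert U v t).charpoly =
      (Gpert U v 0).charpoly + C (t : ℂ) * (U.charpoly - (Gpert U v 0).charpoly) := by
  have hG (s : ℝ) : Gpert U v s = U - (1 - (s : ℂ)) • vecMulVec (U *ᵥ v) (star v) := by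
    rw [Gpert, Apert, mul_sub, mul_one, mul_smul_comm, mul_vecMulVec]
  have hG0 : Gpert U v 0 = U - vecMulVec (U *ᵥ v) (star v) := by simp [hG]
  rw [hG0, hG, charpoly_sub_smul_vecMulVec, sub_sub_cancel, C_sub, C_1]
  ring

end RankOnePerturbation

section EigenvalueVelocity

variable {N : ℕ} {U : Matrix (Fin N) (Fin N) ℂ} {v : Fin N → ℂ} {t : ℝ} {l : Fin N → ℂ}

lemma eval_charpoly_Gpert_inv (hU : U ∈ unitaryGroup (Fin N) ℂ) (hv : star v ⬝ᵥ v = 1)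
    (ht : t ≠ 0) (hspec : (Gpert U v t).charpoly = ∏ k, (X - C (l k))) (z : ℂ) :
    (Gpert U v t⁻¹).charpoly.eval z =
      (∏ k, l k) / t ^ 2 * ∏ k, (z * starRingEnd ℂ (l k) - 1) := by
  have htc : (t : ℂ) ≠ 0 := Complex.ofReal_ne_zero.2 ht
  rw [eval_charpoly_of_conjTranspose_mul_eq_one (conjTranspose_Gpert_mul_Gpert_inv hU hv ht) hspec,
    det_Gpert hv, ← det_eq_prod_of_charpoly_eq_prod hspec, det_Gpert hv, Complex.ofReal_inv]
  field_simp

lemma eval_charpoly_pencil_slope (hU : U ∈ unitaryGroup (Fin N) ℂ) (hv : star v ⬝ᵥ v = 1)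
    (ht0 : t ≠ 0) (ht1 : t ^ 2 ≠ 1) (hspec : (Gpert U v t).charpoly = ∏ k, (X - C (l k)))
    (j : Fin N) :
    (U.charpoly - (Gpert U v 0).charpoly).eval (l j) =
      -(((1 - Complex.normSq (l j)) / (t * (1 - t ^ 2)) : ℝ) : ℂ) * (∏ k, l k) *
        ∏ k ∈ univ.erase j, (l j * starRingEnd ℂ (l k) - 1) := by
  have htc : (t : ℂ) ≠ 0 := Complex.ofReal_ne_zero.2 ht0
  have ht1c : (1 : ℂ) - (t : ℂ) ^ 2 ≠ 0 := sub_ne_zero.2 (mod_cast ht1.symm)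
  have hroot : (Gpert U v t).charpoly.eval (l j) = 0 := by
    rw [hspec, eval_prod, prod_eq_zero (mem_univ j) (by simp)]
  have hinv := eval_charpoly_Gpert_inv hU hv ht0 hspec (l j)
  rw [← mul_prod_erase _ (fun k => l j * starRingEnd ℂ (l k) - 1) (mem_univ j),
    Complex.mul_conj] at hinv
  rw [charpoly_Gpert, eval_add, eval_mul, eval_C] at hroot hinv
  push_cast at hinv ⊢
  field_simp at hinv ⊢
  linear_combination hinv - t ^ 2 * hroot

lemma hasDerivAt_root_charpoly_Gpert {μ : ℝ → ℂ} (hμ : ContinuousAt μ t)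
    (hroot : ∀ᶠ s in nhds t, (Gpert U v s).charpoly.IsRoot (μ s))
    (hsimple : (derivative (Gpert U v t).charpoly).eval (μ t) ≠ 0) :
    HasDerivAt μ (-(U.charpoly - (Gpert U v 0).charpoly).eval (μ t) /
      (derivative (Gpert U v t).charpoly).eval (μ t)) t := by
  rw [charpoly_Gpert U v t] at hsimple ⊢
  refine hasDerivAt_root_of_affine_pencil hμ ?_ hsimple
  filter_upwards [hroot] with s hs
  rwa [charpoly_Gpert] at hs

theorem eigenvalue_ODE_general (hU : U ∈ unitaryGroup (Fin N) ℂ)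
    (hv : ∑ i, Complex.normSq (v i) = 1) (ht0 : t ≠ 0) (ht1 : t ^ 2 ≠ 1)
    (hspec : (Gpert U v t).charpoly = ∏ k, (X - C (l k)))
    {j : Fin N} (hsimple : ∀ k ≠ j, l j ≠ l k)
    {μ : ℝ → ℂ} (hμt : μ t = l j) (hμ : ContinuousAt μ t)
    (hroot : ∀ᶠ s in nhds t, (Gpert U v s).charpoly.IsRoot (μ s)) :
    HasDerivAt μ
      ((((1 - Complex.normSq (l j)) / (t * (1 - t ^ 2)) : ℝ) : ℂ) * (∏ k, l k) *
        ∏ k ∈ univ.erase j, (l j * starRingEnd ℂ (l k) - 1) / (l j - l k)) t := by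
  have hunit : star v ⬝ᵥ v = 1 := by rw [star_dotProduct_self_eq_sum_normSq, hv, Complex.ofReal_one]
  have hderiv : (derivative (Gpert U v t).charpoly).eval (l j) =
      ∏ k ∈ univ.erase j, (l j - l k) := by
    rw [hspec, ← Lagrange.nodal, Lagrange.eval_nodal_derivative_eval_node_eq (mem_univ j),
      Lagrange.eval_nodal]
  have hderiv_ne : (derivative (Gpert U v t).charpoly).eval (μ t) ≠ 0 := by
    rw [hμt, hderiv]
    exact prod_ne_zero_iff.2 fun k hk => sub_ne_zero.2 (hsimple k (ne_of_mem_erase hk))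
  refine (hasDerivAt_root_charpoly_Gpert hμ hroot hderiv_ne).congr_deriv ?_
  rw [hμt, hderiv, eval_charpoly_pencil_slope hU hunit ht0 ht1 hspec j, prod_div_distrib]
  ring

end EigenvalueVelocity

/-- the differential equations satisfied by differentiable, pairwise distinct
parametrizations `λ_1, …, λ_N` of the spectrum of `G(t)` on `(0,1)`. The condition that the
`λ_j(t)` form exactly the spectrum of `G(t)` (as a multiset, with multiplicity) is expressed
by the factorization of the characteristic polynomial. -/
theorem eigenvalue_ODE {N : ℕ} (hN : 0 < N)
    (U : Matrix (Fin N) (Fin N) ℂ) (hU : U ∈ Matrix.unitaryGroup (Fin N) ℂ)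
    (v : Fin N → ℂ) (hv : ∑ i, Complex.normSq (v i) = 1)
    (l : Fin N → ℝ → ℂ)
    (hdiff : ∀ j, ∀ t ∈ Set.Ioo (0 : ℝ) 1, DifferentiableAt ℝ (l j) t)
    (hdistinct : ∀ t ∈ Set.Ioo (0 : ℝ) 1, Function.Injective fun j => l j t)
    (hspec : ∀ t ∈ Set.Ioo (0 : ℝ) 1,
      Matrix.charpoly (Gpert U v t) = ∏ j, (X - C (l j t))) :
    ∀ j, ∀ t ∈ Set.Ioo (0 : ℝ) 1,
      deriv (l j) t
        = (((1 - Complex.normSq (l j t)) / (t * (1 - t ^ 2)) : ℝ) : ℂ)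
            * (∏ k, l k t)
            * ∏ k ∈ univ.erase j, (l j t * (starRingEnd ℂ) (l k t) - 1) / (l j t - l k t) := by
  intro j t ht
  refine (eigenvalue_ODE_general hU hv ht.1.ne' (pow_lt_one₀ ht.1.le ht.2 two_ne_zero).ne
    (hspec t ht) (fun k hkj hjk => hkj (hdistinct t ht hjk.symm)) rfl
    (hdiff j t ht).continuousAt ?_).deriv
  filter_upwards [isOpen_Ioo.mem_nhds ht] with s hs
  rw [hspec s hs, isRoot_prod]
  exact ⟨j, mem_univ j, root_X_sub_C.2 rfl⟩

end
end

section
/- Let N ≥ 2 and let μ_N be the Haar probability measure on the unitary group U(N). For every x ∈ [0,1), the μ_N-measure of the set of U ∈ U(N) with |U_{11}|² ≤ x equals 1 − (1−x)^{N−1} (i.e. |U_{11}|² has the Beta(1, N−1) distribution). -/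
open Matrix MeasureTheory

noncomputable section

instance matrixMeasurableSpace {N : ℕ} : MeasurableSpace (Matrix (Fin N) (Fin N) ℂ) :=
  MeasurableSpace.pi

/-! The columns of a Haar unitary matrix are distributed according to a unitarily invariant
probability measure `ν` on `ℂᴺ` with `ν {0} = 0`. Such a measure gives the projective cap
`{w | x ‖w‖² < |⟪u, w⟫|²}` the same mass for every unit vector `u`. As the relation
`x ‖v‖² ‖w‖² < |⟪v, w⟫|²` is symmetric in `v` and `w`, Fubini's theorem shows that any two such
measures agree on caps, so `ν` may be replaced by the Gaussian with density `exp (-π ‖v‖²)`.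
Under that Gaussian the projections `z` to `ℂ u` and `r` to its orthogonal complement are
independent, and `‖z‖²` is exponentially distributed, so the mass of the cap is the expectation
of `exp (-π x ‖r‖² / (1 - x))`, a Gaussian integral. -/

section InvariantMeasure

open scoped InnerProductSpace

variable {𝕜 E : Type*} [RCLike 𝕜] [NormedAddCommGroup E] [InnerProductSpace 𝕜 E]

variable (𝕜) in
/-- The open cap of radius `arccos √x` about the line `𝕜 ∙ v` in projective space, as a cone of
vectors `w`; the defining inequality is homogeneous so that it is symmetric in `v` and `w`. -/
def projectiveCap (x : ℝ) (v : E) : Set E :=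
  {w | x * (‖v‖ ^ 2 * ‖w‖ ^ 2) < ‖⟪v, w⟫_𝕜‖ ^ 2}

lemma mem_projectiveCap_comm {x : ℝ} {v w : E} :
    w ∈ projectiveCap 𝕜 x v ↔ v ∈ projectiveCap 𝕜 x w := by
  simp only [projectiveCap, Set.mem_ofPred_eq, norm_inner_symm v w, mul_comm (‖v‖ ^ 2)]

lemma projectiveCap_smul {c : 𝕜} (hc : c ≠ 0) (x : ℝ) (v : E) :
    projectiveCap 𝕜 x (c • v) = projectiveCap 𝕜 x v := by
  have hc' : 0 < ‖c‖ ^ 2 := by positivity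
  ext w
  simp only [projectiveCap, Set.mem_ofPred_eq, inner_smul_left, norm_smul, norm_mul,
    RCLike.norm_conj, mul_pow, mul_assoc, mul_left_comm x, mul_lt_mul_iff_right₀ hc']

lemma preimage_projectiveCap (T : E ≃ₗᵢ[𝕜] E) (x : ℝ) (v : E) :
    T ⁻¹' projectiveCap 𝕜 x (T v) = projectiveCap 𝕜 x v := by
  ext w
  simp [projectiveCap]

lemma exists_linearIsometryEquiv_apply_eq [FiniteDimensional 𝕜 E] {u v : E}
    (hu : ‖u‖ = 1) (hv : ‖v‖ = 1) : ∃ T : E ≃ₗᵢ[𝕜] E, T u = v := by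
  let fromLine := LinearIsometryEquiv.toSpanUnitSingleton (𝕜 := 𝕜) u hu
  let toLine := LinearIsometryEquiv.toSpanUnitSingleton (𝕜 := 𝕜) v hv
  let L := (Submodule.subtypeₗᵢ _).comp (fromLine.symm.trans toLine).toLinearIsometry
  have hL : L (fromLine 1) = v := by simp [L, toLine]
  refine ⟨L.extend.toLinearIsometryEquiv rfl, ?_⟩
  simpa [fromLine] using (L.extend_apply (fromLine 1)).trans hL

variable [MeasurableSpace E]

variable (𝕜) in
/-- Invariance of a measure under the unitary group of `E` (the orthogonal group when `𝕜 = ℝ`). -/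
def UnitarilyInvariant (ν : Measure E) : Prop :=
  ∀ T : E ≃ₗᵢ[𝕜] E, ν.map T = ν

variable [BorelSpace E]

lemma measurableSet_projectiveCap (x : ℝ) (v : E) : MeasurableSet (projectiveCap 𝕜 x v) :=
  (isOpen_lt (f := fun w ↦ x * (‖v‖ ^ 2 * ‖w‖ ^ 2)) (by fun_prop) (by fun_prop)).measurableSet

variable [FiniteDimensional 𝕜 E]

lemma measurableSet_prod_projectiveCap (x : ℝ) :
    MeasurableSet {p : E × E | p.2 ∈ projectiveCap 𝕜 x p.1} := by
  have := FiniteDimensional.proper_rclike 𝕜 E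
  simp only [projectiveCap, Set.mem_ofPred_eq]
  exact (isOpen_lt (by fun_prop) (by fun_prop)).measurableSet

lemma UnitarilyInvariant.measure_projectiveCap_eq {ν : Measure E} (hν : UnitarilyInvariant 𝕜 ν)
    (x : ℝ) {v w : E} (hv : v ≠ 0) (hw : w ≠ 0) :
    ν (projectiveCap 𝕜 x v) = ν (projectiveCap 𝕜 x w) := by
  obtain ⟨T, hT⟩ := exists_linearIsometryEquiv_apply_eq (𝕜 := 𝕜)
    (norm_smul_inv_norm (𝕜 := 𝕜) hv) (norm_smul_inv_norm (𝕜 := 𝕜) hw)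
  have inv_ne_zero {z : E} (hz : z ≠ 0) : (‖z‖ : 𝕜)⁻¹ ≠ 0 := by simpa using hz
  calc ν (projectiveCap 𝕜 x v)
      = ν (T ⁻¹' projectiveCap 𝕜 x (T ((‖v‖ : 𝕜)⁻¹ • v))) := by
        rw [preimage_projectiveCap, projectiveCap_smul (inv_ne_zero hv)]
    _ = ν (projectiveCap 𝕜 x ((‖w‖ : 𝕜)⁻¹ • w)) := by
        rw [hT, ← Measure.map_apply T.continuous.measurable (measurableSet_projectiveCap _ _), hν T]
    _ = ν (projectiveCap 𝕜 x w) := by rw [projectiveCap_smul (inv_ne_zero hw)]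

/- Both sides are the mass that `ν.prod ρ` gives to the symmetric relation
`w ∈ projectiveCap 𝕜 x v`. -/
lemma UnitarilyInvariant.measure_projectiveCap_unique {ν ρ : Measure E}
    [IsProbabilityMeasure ν] [IsProbabilityMeasure ρ] (hν : UnitarilyInvariant 𝕜 ν)
    (hρ : UnitarilyInvariant 𝕜 ρ) (hν₀ : ∀ᵐ v ∂ν, v ≠ 0) (hρ₀ : ∀ᵐ v ∂ρ, v ≠ 0)
    (x : ℝ) {u : E} (hu : u ≠ 0) :
    ν (projectiveCap 𝕜 x u) = ρ (projectiveCap 𝕜 x u) := by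
  have hmeas := measurableSet_prod_projectiveCap (𝕜 := 𝕜) (E := E) x
  calc ν (projectiveCap 𝕜 x u)
      = ∫⁻ w, ν (projectiveCap 𝕜 x w) ∂ρ := by
        rw [lintegral_congr_ae (hρ₀.mono fun w hw ↦ hν.measure_projectiveCap_eq x hw hu)]
        simp
    _ = ν.prod ρ {p | p.2 ∈ projectiveCap 𝕜 x p.1} := by
        rw [Measure.prod_apply_symm hmeas]
        simp only [Set.preimage, mem_projectiveCap_comm, Set.mem_ofPred_eq, Set.ofPred_mem_eq]
    _ = ∫⁻ v, ρ (projectiveCap 𝕜 x v) ∂ν := Measure.prod_apply hmeas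
    _ = ρ (projectiveCap 𝕜 x u) := by
        rw [lintegral_congr_ae (hν₀.mono fun v hv ↦ hρ.measure_projectiveCap_eq x hv hu)]
        simp

end InvariantMeasure


section Gaussian

open Real Module Filter Topology

variable (V W : Type*)
  [NormedAddCommGroup V] [InnerProductSpace ℝ V] [FiniteDimensional ℝ V]
  [MeasurableSpace V] [BorelSpace V]
  [NormedAddCommGroup W] [InnerProductSpace ℝ W] [FiniteDimensional ℝ W]
  [MeasurableSpace W] [BorelSpace W]

/-- The rotation invariant Gaussian probability measure on `V` with density `exp (-π ‖v‖²)`, a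
scaling that needs no normalizing constant in any dimension. -/
def piGaussian : Measure V :=
  volume.withDensity fun v ↦ ENNReal.ofReal (rexp (-π * ‖v‖ ^ 2))

variable {V W}

lemma lintegral_exp_neg_mul_sq_norm {b : ℝ} (hb : 0 < b) :
    ∫⁻ v : V, ENNReal.ofReal (rexp (-b * ‖v‖ ^ 2)) =
      ENNReal.ofReal ((π / b) ^ (finrank ℝ V / 2 : ℝ)) := by
  have hint := GaussianFourier.integral_rexp_neg_mul_sq_norm (V := V) hb
  rw [← hint, ofReal_integral_eq_lintegral_ofReal _ (.of_forall fun v ↦ (exp_pos _).le)]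
  exact .of_integral_ne_zero (by rw [hint]; positivity)

instance isProbabilityMeasure_piGaussian : IsProbabilityMeasure (piGaussian V) where
  measure_univ := by
    rw [piGaussian, withDensity_apply _ .univ, setLIntegral_univ,
      lintegral_exp_neg_mul_sq_norm pi_pos]
    simp [pi_ne_zero]

lemma lintegral_piGaussian_exp_neg_mul_sq_norm {c : ℝ} (hc : -1 < c) :
    ∫⁻ v, ENNReal.ofReal (rexp (-π * (c * ‖v‖ ^ 2))) ∂piGaussian V =
      ENNReal.ofReal ((1 + c) ^ (-(finrank ℝ V / 2) : ℝ)) := by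
  have hc' : 0 < 1 + c := by linarith
  calc ∫⁻ v, ENNReal.ofReal (rexp (-π * (c * ‖v‖ ^ 2))) ∂piGaussian V
      = ∫⁻ v : V, ENNReal.ofReal (rexp (-(π * (1 + c)) * ‖v‖ ^ 2)) := by
        rw [piGaussian, lintegral_withDensity_eq_lintegral_mul _ (by fun_prop) (by fun_prop)]
        refine lintegral_congr fun v ↦ ?_
        rw [Pi.mul_apply, ← ENNReal.ofReal_mul (exp_pos _).le, ← exp_add]
        ring_nf
    _ = ENNReal.ofReal ((1 + c) ^ (-(finrank ℝ V / 2) : ℝ)) := by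
        rw [lintegral_exp_neg_mul_sq_norm (by positivity), div_mul_cancel_left₀ pi_ne_zero,
          inv_rpow hc'.le, rpow_neg hc'.le]

lemma measurePreserving_withDensity {α β : Type*} [MeasurableSpace α] [MeasurableSpace β]
    {μ : Measure α} {ν : Measure β} {T : α → β} (hT : MeasurePreserving T μ ν)
    {f : α → ENNReal} {g : β → ENNReal} (hg : Measurable g) (hfg : ∀ a, f a = g (T a)) :
    MeasurePreserving T (μ.withDensity f) (ν.withDensity g) := by
  refine ⟨hT.measurable, Measure.ext fun s hs ↦ ?_⟩
  rw [Measure.map_apply hT.measurable hs, withDensity_apply _ (hT.measurable hs),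
    withDensity_apply _ hs, ← hT.setLIntegral_comp_preimage hs hg, funext hfg]

lemma measurePreserving_piGaussian (T : V ≃ₗᵢ[ℝ] W) :
    MeasurePreserving T (piGaussian V) (piGaussian W) :=
  measurePreserving_withDensity T.measurePreserving (by fun_prop) fun v ↦ by rw [T.norm_map]

lemma measurePreserving_ofLp_piGaussian :
    MeasurePreserving (WithLp.ofLp : WithLp 2 (V × W) → V × W) (piGaussian (WithLp 2 (V × W)))
      ((piGaussian V).prod (piGaussian W)) := by
  rw [piGaussian, piGaussian, piGaussian, prod_withDensity (by fun_prop) (by fun_prop)]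
  refine measurePreserving_withDensity (WithLp.volume_preserving_ofLp V W) (by fun_prop) fun p ↦ ?_
  rw [WithLp.prod_norm_sq_eq_of_L2, mul_add, exp_add, ENNReal.ofReal_mul (exp_pos _).le]
  rfl

lemma integral_Ioi_mul_exp_neg_mul_sq {b : ℝ} (hb : 0 < b) (s : ℝ) :
    ∫ r in Set.Ioi s, r * rexp (-b * r ^ 2) = rexp (-b * s ^ 2) / (2 * b) := by
  have hderiv (r : ℝ) : HasDerivAt (fun r ↦ -(2 * b)⁻¹ * rexp (-b * r ^ 2))
      (r * rexp (-b * r ^ 2)) r := by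
    refine ((((hasDerivAt_pow 2 r).const_mul (-b)).exp).const_mul (-(2 * b)⁻¹)).congr_deriv ?_
    field_simp
    simp
  have hlim : Tendsto (fun r : ℝ ↦ -(2 * b)⁻¹ * rexp (-b * r ^ 2)) atTop (𝓝 0) := by
    have hexponent : Tendsto (fun r : ℝ ↦ -b * r ^ 2) atTop atBot :=
      (tendsto_pow_atTop two_ne_zero).const_mul_atTop_of_neg (neg_lt_zero.2 hb)
    simpa using (tendsto_exp_atBot.comp hexponent).const_mul (-(2 * b)⁻¹)
  rw [integral_Ioi_of_hasDerivAt_of_tendsto' (fun r _ ↦ hderiv r)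
    (integrable_mul_exp_neg_mul_sq hb).integrableOn hlim]
  ring

lemma setIntegral_exp_neg_mul_sq_norm_of_finrank_eq_two (hV : finrank ℝ V = 2) {b s : ℝ}
    (hb : 0 < b) (hs : 0 ≤ s) :
    ∫ v in {v : V | s < ‖v‖}, rexp (-b * ‖v‖ ^ 2) = π / b * rexp (-b * s ^ 2) := by
  have : Nontrivial V := nontrivial_of_finrank_pos (R := ℝ) (by omega)
  have hball : volume.real (Metric.ball (0 : V) 1) = π := by
    simp [measureReal_def, InnerProductSpace.volume_ball_of_dim_even (k := 1) hV, pi_pos.le]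
  let radial : ℝ → ℝ := (Set.Ioi s).indicator fun r ↦ rexp (-b * r ^ 2)
  calc ∫ v in {v : V | s < ‖v‖}, rexp (-b * ‖v‖ ^ 2)
      = ∫ v : V, radial ‖v‖ := by
        rw [← integral_indicator (measurableSet_lt measurable_const measurable_norm)]
        rfl
    _ = 2 * (π * ∫ r in Set.Ioi 0, r * radial r) := by
        simp [integral_fun_norm_addHaar, hV, hball]
    _ = 2 * (π * ∫ r in Set.Ioi s, r * rexp (-b * r ^ 2)) := by
        simp only [radial, ← Set.indicator_mul_right (Set.Ioi s) fun r : ℝ ↦ r]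
        rw [setIntegral_indicator measurableSet_Ioi,
          Set.inter_eq_right.2 (Set.Ioi_subset_Ioi hs)]
    _ = π / b * rexp (-b * s ^ 2) := by
        rw [integral_Ioi_mul_exp_neg_mul_sq hb]
        field_simp

lemma piGaussian_lt_sq_norm (hV : finrank ℝ V = 2) {t : ℝ} (ht : 0 ≤ t) :
    piGaussian V {v | t < ‖v‖ ^ 2} = ENNReal.ofReal (rexp (-π * t)) := by
  have hset : {v : V | t < ‖v‖ ^ 2} = {v | √t < ‖v‖} := by
    ext v
    rw [Set.mem_ofPred_eq, Set.mem_ofPred_eq, ← sqrt_lt_sqrt_iff ht, sqrt_sq (norm_nonneg v)]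
  have hint := setIntegral_exp_neg_mul_sq_norm_of_finrank_eq_two hV pi_pos (sqrt_nonneg t)
  rw [sq_sqrt ht, div_self pi_ne_zero, one_mul] at hint
  rw [hset, piGaussian, withDensity_apply _ (measurableSet_lt (by fun_prop) (by fun_prop)), ← hint,
    ofReal_integral_eq_lintegral_ofReal _ (.of_forall fun v ↦ (exp_pos _).le)]
  exact .of_integral_ne_zero (by rw [hint]; positivity)

lemma prod_piGaussian_lt_sq_norm (hV : finrank ℝ V = 2) {c : ℝ} (hc : 0 ≤ c) :
    (piGaussian V).prod (piGaussian W) {p | c * ‖p.2‖ ^ 2 < ‖p.1‖ ^ 2} =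
      ENNReal.ofReal ((1 + c) ^ (-(finrank ℝ W / 2) : ℝ)) := by
  rw [Measure.prod_apply_symm (measurableSet_lt (by fun_prop) (by fun_prop)),
    ← lintegral_piGaussian_exp_neg_mul_sq_norm (by linarith)]
  exact lintegral_congr fun w ↦
    piGaussian_lt_sq_norm hV (t := c * ‖w‖ ^ 2) (by positivity)

lemma piGaussian_starProjection (K : Submodule ℝ V) (hK : finrank ℝ K = 2) {x : ℝ}
    (hx₀ : 0 ≤ x) (hx₁ : x < 1) :
    piGaussian V {v | x * ‖v‖ ^ 2 < ‖K.starProjection v‖ ^ 2} =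
      ENNReal.ofReal ((1 - x) ^ (finrank ℝ Kᗮ / 2 : ℝ)) := by
  have hx : 0 < 1 - x := by linarith
  have hratio : 1 + x / (1 - x) = (1 - x)⁻¹ := by field_simp; ring
  have hsplit := measurePreserving_ofLp_piGaussian.comp
    (measurePreserving_piGaussian K.orthogonalDecomposition)
  have hpre : {v : V | x * ‖v‖ ^ 2 < ‖K.starProjection v‖ ^ 2} =
      (WithLp.ofLp ∘ K.orthogonalDecomposition) ⁻¹'
        {p : K × Kᗮ | x / (1 - x) * ‖p.2‖ ^ 2 < ‖p.1‖ ^ 2} := by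
    ext v
    simp only [Set.mem_preimage, Function.comp_apply, Set.mem_ofPred_eq,
      K.norm_sq_eq_add_norm_sq_projection v, K.orthogonalDecomposition_apply,
      K.starProjection_apply, Submodule.coe_norm, div_mul_eq_mul_div, div_lt_iff₀ hx]
    constructor <;> intro h <;> linarith
  rw [hpre, hsplit.measure_preimage
    (measurableSet_lt (by fun_prop) (by fun_prop)).nullMeasurableSet,
    prod_piGaussian_lt_sq_norm hK (by positivity), hratio, inv_rpow hx.le, rpow_neg hx.le, inv_inv]

end Gaussian


section ComplexGaussian

open Real Module
open scoped InnerProductSpace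

variable {E : Type*} [NormedAddCommGroup E] [InnerProductSpace ℂ E]

attribute [local instance] InnerProductSpace.complexToReal

lemma starProjection_restrictScalars_span_singleton [FiniteDimensional ℂ E] {u : E} (hu : ‖u‖ = 1)
    (w : E) :
    ((ℂ ∙ u).restrictScalars ℝ).starProjection w = ⟪u, w⟫_ℂ • u := by
  refine Submodule.eq_starProjection_of_mem_of_inner_eq_zero
    (Submodule.smul_mem _ _ (Submodule.mem_span_singleton_self u)) fun z hz ↦ ?_
  obtain ⟨c, rfl⟩ := Submodule.mem_span_singleton.1 hz
  have : ⟪w - ⟪u, w⟫_ℂ • u, c • u⟫_ℂ = 0 := by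
    simp [inner_self_eq_norm_sq_to_K, hu]
  exact congrArg Complex.re this

lemma finrank_restrictScalars_span_singleton {u : E} (hu : u ≠ 0) :
    finrank ℝ ((ℂ ∙ u).restrictScalars ℝ) = 2 := by
  have := finrank_real_of_complex (ℂ ∙ u)
  rwa [finrank_span_singleton hu] at this

variable [MeasurableSpace E] [BorelSpace E] [FiniteDimensional ℂ E]

lemma unitarilyInvariant_piGaussian : UnitarilyInvariant ℂ (piGaussian E) := fun T ↦
  let realT : E ≃ₗᵢ[ℝ] E := ⟨T.toLinearEquiv.restrictScalars ℝ, T.norm_map⟩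
  (measurePreserving_piGaussian realT).map_eq

lemma ae_ne_zero_piGaussian [Nontrivial E] : ∀ᵐ v ∂piGaussian E, v ≠ 0 :=
  withDensity_absolutelyContinuous _ _ (Measure.ae_ne volume 0)

lemma piGaussian_projectiveCap {x : ℝ} (hx₀ : 0 ≤ x) (hx₁ : x < 1) {u : E} (hu : ‖u‖ = 1) :
    piGaussian E (projectiveCap ℂ x u) = ENNReal.ofReal ((1 - x) ^ (finrank ℂ E - 1)) := by
  set K := (ℂ ∙ u).restrictScalars ℝ with hKdef
  have hu₀ : u ≠ 0 := norm_ne_zero_iff.1 (hu ▸ one_ne_zero)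
  have hK : finrank ℝ K = 2 := finrank_restrictScalars_span_singleton hu₀
  have hcap : projectiveCap ℂ x u = {w | x * ‖w‖ ^ 2 < ‖K.starProjection w‖ ^ 2} := by
    simp [projectiveCap, hKdef, starProjection_restrictScalars_span_singleton hu, norm_smul, hu]
  have hcompl : finrank ℝ Kᗮ = 2 * (finrank ℂ E - 1) := by
    have := K.finrank_add_finrank_orthogonal
    rw [finrank_real_of_complex] at this
    omega
  rw [hcap, piGaussian_starProjection K hK hx₀ hx₁, hcompl]
  congr 1
  rw [← rpow_natCast]
  push_cast
  rw [mul_div_cancel_left₀ _ two_ne_zero]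

end ComplexGaussian

section InvariantLaw

open Module

lemma UnitarilyInvariant.measure_projectiveCap {E : Type*} [NormedAddCommGroup E]
    [InnerProductSpace ℂ E] [FiniteDimensional ℂ E] [MeasurableSpace E] [BorelSpace E]
    {ν : Measure E} [IsProbabilityMeasure ν] (hν : UnitarilyInvariant ℂ ν)
    (hν₀ : ∀ᵐ v ∂ν, v ≠ 0) {x : ℝ} (hx₀ : 0 ≤ x) (hx₁ : x < 1) {u : E} (hu : ‖u‖ = 1) :
    ν (projectiveCap ℂ x u) = ENNReal.ofReal ((1 - x) ^ (finrank ℂ E - 1)) := by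
  have hu₀ : u ≠ 0 := norm_ne_zero_iff.1 (hu ▸ one_ne_zero)
  have : Nontrivial E := ⟨u, 0, hu₀⟩
  rw [hν.measure_projectiveCap_unique unitarilyInvariant_piGaussian hν₀
    ae_ne_zero_piGaussian x hu₀, piGaussian_projectiveCap hx₀ hx₁ hu]

end InvariantLaw

section UnitaryGroup

open scoped InnerProductSpace

variable {N : ℕ}

/-- `column j U` is the `j`-th column of `U` as a vector of Hermitian space. -/
def column (j : Fin N) (U : unitaryGroup (Fin N) ℂ) : EuclideanSpace ℂ (Fin N) :=
  WithLp.toLp 2 ((U : Matrix (Fin N) (Fin N) ℂ).col j)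

lemma measurable_entry (i j : Fin N) :
    Measurable fun U : unitaryGroup (Fin N) ℂ ↦ (U : Matrix (Fin N) (Fin N) ℂ) i j :=
  (measurable_pi_apply j).comp ((measurable_pi_apply i).comp measurable_subtype_coe)

lemma measurable_column (j : Fin N) : Measurable (column j) :=
  (WithLp.measurable_toLp 2 _).comp (measurable_pi_lambda _ fun i ↦ measurable_entry i j)

lemma measurable_mul_left_unitaryGroup (V : unitaryGroup (Fin N) ℂ) :
    Measurable fun U : unitaryGroup (Fin N) ℂ ↦ V * U := by
  refine .subtype_mk (measurable_pi_lambda _ fun i ↦ measurable_pi_lambda _ fun j ↦ ?_)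
  simp only [mul_apply]
  exact Finset.measurable_fun_sum _ fun k _ ↦ (measurable_entry k j).const_mul _

lemma column_mul (V U : unitaryGroup (Fin N) ℂ) (j : Fin N) :
    column j (V * U) = toEuclideanLin (V : Matrix (Fin N) (Fin N) ℂ) (column j U) :=
  rfl

lemma norm_column (j : Fin N) (U : unitaryGroup (Fin N) ℂ) : ‖column j U‖ = 1 := by
  have h : (star (U : Matrix (Fin N) (Fin N) ℂ) * (U : Matrix (Fin N) (Fin N) ℂ)) j j = 1 := by
    rw [mem_unitaryGroup_iff'.1 U.2, one_apply_eq]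
  have hsum : ((∑ i, ‖(U : Matrix (Fin N) (Fin N) ℂ) i j‖ ^ 2 : ℝ) : ℂ) = 1 := by
    simpa [mul_apply, star_apply, Complex.conj_mul'] using h
  rw [← sq_eq_sq₀ (norm_nonneg _) zero_le_one, one_pow, EuclideanSpace.norm_sq_eq]
  exact_mod_cast hsum

lemma unitarilyInvariant_map_column {μ : Measure (unitaryGroup (Fin N) ℂ)}
    (hμ : ∀ V : unitaryGroup (Fin N) ℂ, μ.map (fun U ↦ V * U) = μ) (j : Fin N) :
    UnitarilyInvariant ℂ (μ.map (column j)) := by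
  intro T
  let b := EuclideanSpace.basisFun (Fin N) ℂ
  let V : unitaryGroup (Fin N) ℂ := ⟨_, T.toMatrix_mem_unitaryGroup b b⟩
  have hV : toEuclideanLin (V : Matrix (Fin N) (Fin N) ℂ) = T.toLinearMap := by
    rw [toEuclideanLin_eq_toLin_orthonormal]
    exact toLin_toMatrix ..
  have hT : T ∘ column j = column j ∘ fun U ↦ V * U := by
    ext1 U
    simp only [Function.comp_apply, column_mul, hV]
    rfl
  rw [Measure.map_map T.continuous.measurable (measurable_column j), hT,
    ← Measure.map_map (measurable_column j) (measurable_mul_left_unitaryGroup V), hμ]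

lemma column_mem_projectiveCap_single {x : ℝ} {i j : Fin N} {U : unitaryGroup (Fin N) ℂ} :
    column j U ∈ projectiveCap ℂ x (EuclideanSpace.single i 1) ↔
      x < Complex.normSq ((U : Matrix (Fin N) (Fin N) ℂ) i j) := by
  rw [projectiveCap, Set.mem_ofPred_eq, norm_column, Complex.normSq_eq_norm_sq]
  simp [column, EuclideanSpace.inner_single_left]

theorem entry_beta_distribution_general
    (μ : Measure (unitaryGroup (Fin N) ℂ)) [IsProbabilityMeasure μ]
    (hinv : ∀ V : unitaryGroup (Fin N) ℂ, μ.map (fun U ↦ V * U) = μ) (i j : Fin N)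
    (x : ℝ) (hx0 : 0 ≤ x) (hx1 : x < 1) :
    μ {U | Complex.normSq ((U : Matrix (Fin N) (Fin N) ℂ) i j) ≤ x} =
      ENNReal.ofReal (1 - (1 - x) ^ (N - 1)) := by
  let cap := projectiveCap ℂ x (EuclideanSpace.single i (1 : ℂ))
  have hcap : MeasurableSet cap := measurableSet_projectiveCap x _
  have hcol := measurable_column j
  have := Measure.isProbabilityMeasure_map hcol.aemeasurable (μ := μ)
  have hne : ∀ᵐ v ∂μ.map (column j), v ≠ 0 :=
    (ae_map_iff hcol.aemeasurable (measurableSet_singleton 0).compl).2 <| .of_forall fun U ↦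
      norm_ne_zero_iff.1 (by simp [norm_column])
  have htail : μ (column j ⁻¹' cap) = ENNReal.ofReal ((1 - x) ^ (N - 1)) := by
    rw [← Measure.map_apply hcol hcap, (unitarilyInvariant_map_column hinv j).measure_projectiveCap
      hne hx0 hx1 (by simp), finrank_euclideanSpace_fin]
  have hcompl : {U : unitaryGroup (Fin N) ℂ |
      Complex.normSq ((U : Matrix (Fin N) (Fin N) ℂ) i j) ≤ x} =
      (column j ⁻¹' cap)ᶜ := by
    ext U
    simp [cap, column_mem_projectiveCap_single]
  rw [hcompl, prob_compl_eq_one_sub (hcol hcap), htail,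
    ENNReal.ofReal_sub _ (pow_nonneg (by linarith) _), ENNReal.ofReal_one]

end UnitaryGroup

/-- under the Haar probability measure on `U(N)` (formalized as a
left-invariant probability measure on the unitary group), `|U_{11}|²` has the
`Beta(1, N-1)` distribution: for `x ∈ [0,1)` the measure of `{|U_{11}|² ≤ x}` is
`1 - (1-x)^(N-1)`. -/
theorem entry_beta_distribution {N : ℕ} (hN : 2 ≤ N)
    (μ : Measure (Matrix.unitaryGroup (Fin N) ℂ)) [IsProbabilityMeasure μ]
    (hinv : ∀ V : Matrix.unitaryGroup (Fin N) ℂ,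
      μ.map (fun U : Matrix.unitaryGroup (Fin N) ℂ => V * U) = μ)
    (x : ℝ) (hx0 : 0 ≤ x) (hx1 : x < 1) :
    μ {U : Matrix.unitaryGroup (Fin N) ℂ |
        Complex.normSq ((U : Matrix (Fin N) (Fin N) ℂ) ⟨0, by omega⟩ ⟨0, by omega⟩) ≤ x}
      = ENNReal.ofReal (1 - (1 - x) ^ (N - 1)) := by
  exact entry_beta_distribution_general μ hinv _ _ x hx0 hx1

end
end
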